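/- Let x be a positive irrational real number, let p be a prime with p < x, and let a be a squarefree positive integer with a > px, divisible by p, all of whose prime factors are less than x. Then for every integer k with 1 ≤ k ≤ p−1 one has {x/a} < {kN_p/a}; in particular there is no k with 1 ≤ k ≤ p−1 satisfying {x/a} > {kN_p/a}. -/

import Mathlib

open scoped Classical
open Finset

noncomputable section

/-- Sum of the Möbius function over positive integers `a` in the open interval `(u, v)`
that are *not* divisible by `p`. -/
def Mp' (p : ℕ) (u v : ℝ) : ℤ :=
  ∑ a ∈ (Finset.Icc 1 ⌈v⌉₊).filter
      (fun a : ℕ => u < (a : ℝ) ∧ (a : ℝ) < v ∧ ¬ p ∣ a),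
    ArithmeticFunction.moebius a

/-- Sum of the Möbius function over positive integers `a` in the open interval `(u, v)`
that *are* divisible by `p`. -/
def Mp (p : ℕ) (u v : ℝ) : ℤ :=
  ∑ a ∈ (Finset.Icc 1 ⌈v⌉₊).filter
      (fun a : ℕ => u < (a : ℝ) ∧ (a : ℝ) < v ∧ p ∣ a),
    ArithmeticFunction.moebius a

/-- `Sx y u v` : the set of positive integers in the open interval `(u, v)` all of whose
prime divisors exceed `y`. -/
def Sx (y u v : ℝ) : Set ℕ :=
  {a : ℕ | 0 < a ∧ u < (a : ℝ) ∧ (a : ℝ) < v ∧ ∀ q : ℕ, q.Prime → q ∣ a → y < (q : ℝ)}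

/-- `Np x p` : the product of all primes `q < x` with `q ≠ p`. -/
def Np (x : ℝ) (p : ℕ) : ℕ :=
  ∏ q ∈ (Finset.range ⌈x⌉₊).filter (fun q : ℕ => q.Prime ∧ (q : ℝ) < x ∧ q ≠ p), q

/-- `Aset x j` : squarefree positive integers with exactly `j` prime factors,
all of them less than `x`. -/
def Aset (x : ℝ) (j : ℕ) : Finset ℕ :=
  (Finset.Icc 1 (⌈x⌉₊ ^ j)).filter
    (fun a => Squarefree a ∧ a.primeFactors.card = j ∧ ∀ q ∈ a.primeFactors, (q : ℝ) < x)

/-- `Nint a b` : the number of integers in the open interval `(a, b)`. -/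
def Nint (a b : ℝ) : ℕ :=
  (Finset.Ioo ⌊a⌋ ⌈b⌉).card

/-- `Rres a b = (b - a) - N(a, b)`. -/
def Rres (a b : ℝ) : ℝ :=
  (b - a) - Nint a b

/-- `piR t` : the number of primes `≤ t`. -/
def piR (t : ℝ) : ℕ :=
  Nat.primeCounting ⌊t⌋₊

theorem stmt_17 (x : ℝ) (hx : 0 < x) (hxirr : Irrational x)
    (p : ℕ) (hp : p.Prime) (hpx : (p : ℝ) < x)
    (a : ℕ) (ha : (p : ℝ) * x < a) (hsf : Squarefree a) (hpa : p ∣ a)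
    (hfac : ∀ q ∈ a.primeFactors, (q : ℝ) < x) :
    (∀ k : ℕ, 1 ≤ k → k ≤ p - 1 →
        Int.fract (x / a) < Int.fract (((k : ℝ) * Np x p) / a))
      ∧ ¬∃ k : ℕ, 1 ≤ k ∧ k ≤ p - 1 ∧
          Int.fract (((k : ℝ) * Np x p) / a) < Int.fract (x / a) := by
  have main : ∀ k : ℕ, 1 ≤ k → k ≤ p - 1 →
        Int.fract (x / a) < Int.fract (((k : ℝ) * Np x p) / a) := by
    intro k hk1 hk2
    have hp0 : (0 : ℝ) < p := by exact_mod_cast hp.pos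
    have ha0 : (0 : ℝ) < a := lt_trans (by positivity) ha
    obtain ⟨b, rfl⟩ := hpa
    have hb0 : b ≠ 0 := by
      rintro rfl
      simp at ha0
    have hpb : ¬ p ∣ b := by
      rintro ⟨c, rfl⟩
      have := hsf p ⟨c, by ring⟩
      exact hp.one_lt.ne' (Nat.isUnit_iff.mp this)
    have hbsf : Squarefree b := hsf.squarefree_of_dvd ⟨p, by ring⟩
    have hbN : b ∣ Np x p := by
      rw [← Nat.prod_primeFactors_of_squarefree hbsf]
      unfold Np
      apply Finset.prod_dvd_prod_of_subset
      intro q hq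
      have hq' := Nat.mem_primeFactors.mp hq
      have hqx : (q : ℝ) < x := hfac q (Nat.mem_primeFactors.mpr
        ⟨hq'.1, hq'.2.1.mul_left p, mul_ne_zero hp.ne_zero hb0⟩)
      simp only [Finset.mem_filter, Finset.mem_range]
      refine ⟨Nat.lt_ceil.mpr hqx, hq'.1, hqx, ?_⟩
      rintro rfl
      exact hpb hq'.2.1
    have hpN : ¬ p ∣ Np x p := by
      unfold Np
      intro h
      obtain ⟨q, hq, hpq⟩ := (hp.prime.dvd_finset_prod_iff _).mp h
      simp only [Finset.mem_filter] at hq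
      exact hq.2.2.2 ((Nat.prime_dvd_prime_iff_eq hp hq.2.1).mp hpq).symm
    obtain ⟨c, hc⟩ := hbN
    have hkc : ¬ p ∣ k * c := by
      intro h
      rcases hp.dvd_mul.mp h with h | h
      · have := Nat.le_of_dvd hk1 h
        have := hp.pos
        omega
      · exact hpN (hc ▸ h.mul_left b)
    have hbR : (b : ℝ) ≠ 0 := by exact_mod_cast hb0
    have e : ((k : ℝ) * Np x p) / ((p * b : ℕ) : ℝ) = ((k * c : ℕ) : ℝ) / (p : ℕ) := by
      rw [hc]
      push_cast
      field_simp
    rw [e, Int.fract_div_natCast_eq_div_natCast_mod]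
    have h1 : x / ((p * b : ℕ) : ℝ) < 1 / p := by
      rw [div_lt_div_iff₀ ha0 hp0]
      linarith
    have h2 : (1 : ℝ) / p ≤ ((k * c % p : ℕ) : ℝ) / p := by
      have : 1 ≤ k * c % p := Nat.one_le_iff_ne_zero.mpr
        (fun h => hkc (Nat.dvd_of_mod_eq_zero h))
      gcongr
      exact_mod_cast this
    have h3 : Int.fract (x / ((p * b : ℕ) : ℝ)) ≤ x / ((p * b : ℕ) : ℝ) := by
      have : 0 ≤ ⌊x / ((p * b : ℕ) : ℝ)⌋ := Int.floor_nonneg.mpr (by positivity)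
      have : (0 : ℝ) ≤ ⌊x / ((p * b : ℕ) : ℝ)⌋ := by exact_mod_cast this
      unfold Int.fract
      linarith
    linarith
  refine ⟨main, ?_⟩
  rintro ⟨k, h1, h2, h3⟩
  exact lt_asymm h3 (main k h1 h2)

end
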